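/- arXiv:2007.15808 — 4 statements merged into one kernel-verified Lean document; each statement's English description precedes it below -/
import Mathlib

section
/- Let θ ∈ ℝ and let d = 2. Suppose U is a 2×2 unitary complex matrix and V is a 4×4 unitary complex matrix such that the deterministic distinguishability condition (DDC) holds for the output states |ψ_b(x,s)⟩ = V (R_θ ⊗ U)^b (|x⟩ ⊗ |s⟩). Then θ is an integer multiple of π/4, i.e. there exists k ∈ ℤ with θ = kπ/4. -/
open Matrix
open scoped Kronecker Classical

/-- The rotation matrix `R_θ` with rows `(cos θ, −sin θ)` and `(sin θ, cos θ)`,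
viewed as a complex matrix. -/
noncomputable def Rot (θ : ℝ) : Matrix (Fin 2) (Fin 2) ℂ :=
  !![(Real.cos θ : ℂ), -(Real.sin θ : ℂ); (Real.sin θ : ℂ), (Real.cos θ : ℂ)]

/-- The output state `|ψ_b(x,s)⟩ = V (R_θ ⊗ U)^b (|x⟩ ⊗ |s⟩) ∈ ℂ^{2d}`,
where `ℂ^{2d}` is identified with `ℂ² ⊗ ℂ^d` via the index type `Fin 2 × Fin d`. -/
noncomputable def psi (d : ℕ) (θ : ℝ) (U : Matrix (Fin d) (Fin d) ℂ)
    (V : Matrix (Fin 2 × Fin d) (Fin 2 × Fin d) ℂ) (b x : Fin 2) (s : Fin d) :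
    Fin 2 × Fin d → ℂ :=
  (V * (Rot θ ⊗ₖ U) ^ (b : ℕ)).mulVec (Pi.single (x, s) 1)

/-- The deterministic distinguishability condition (DDC): for all `u`, `s`, `b`,
`⟨u|ψ_b(0,s)⟩ = 0` or `⟨u|ψ_b(1,s)⟩ = 0`. -/
def DDC (d : ℕ) (θ : ℝ) (U : Matrix (Fin d) (Fin d) ℂ)
    (V : Matrix (Fin 2 × Fin d) (Fin 2 × Fin d) ℂ) : Prop :=
  ∀ (u : Fin 2 × Fin d) (s : Fin d) (b : Fin 2),
    psi d θ U V b 0 s u = 0 ∨ psi d θ U V b 1 s u = 0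

/-!
Reshape row `u` of `V` into a `d × 2` matrix `M u`. The DDC for `b = 0` says that each row of `M u`
has at most one nonzero entry, and for `b = 1` it says the same of `Uᵀ * M u * R_θ`. Hence the Gram
matrix `G = (M u)ᴴ * M v` is constrained both before and after conjugation by `R_θ`, while its trace
is the inner product of the rows `u` and `v`.

Suppose `sin 2θ` and `cos 2θ` are nonzero. Taking `u = v`, the matrix `G` and its conjugate are
diagonal, so `G = 1/2` and `M u` is invertible when `d = 2`. Both reshaped rows are then supported
on permutations of two points. Two different `u`, `v` cannot have the same pair of permutations, as
`G` would be scalar of trace `0`; so the four rows realise all four pairs. But two rows that share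
the first permutation and not the second have `G` diagonal with conjugate of zero diagonal, which
forces `G = 0`, against invertibility.
-/

section SupportedOnGraph

variable {m n R : Type*} {σ τ : m → n}

/-- `A` vanishes outside the graph of `σ`: the only entry of row `i` that may be nonzero is the
one in column `σ i`. -/
def SupportedOnGraph [Zero R] (σ : m → n) (A : Matrix m n R) : Prop :=
  ∀ ⦃i j⦄, σ i ≠ j → A i j = 0

lemma exists_supportedOnGraph_of_apply_eq_zero_or [Zero R] {A : Matrix m (Fin 2) R}
    (h : ∀ i, A i 0 = 0 ∨ A i 1 = 0) : ∃ σ, SupportedOnGraph σ A := by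
  have h_row : ∀ i, ∃ k, ∀ j, k ≠ j → A i j = 0 := by
    intro i
    rcases h i with h0 | h1
    · exact ⟨1, fun j hj => by fin_cases j <;> simp_all⟩
    · exact ⟨0, fun j hj => by fin_cases j <;> simp_all⟩
  choose σ hσ using h_row
  exact ⟨σ, hσ⟩

lemma SupportedOnGraph.surjective_of_isUnit [CommRing R] [Nontrivial R] [Fintype n]
    [DecidableEq n] {σ : n → n} {A : Matrix n n R} (hA : SupportedOnGraph σ A) (hu : IsUnit A) :
    Function.Surjective σ := by
  intro j
  by_contra! hj
  have hdet : A.det = 0 := det_eq_zero_of_column_eq_zero j fun i => hA (hj i)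
  exact not_isUnit_zero (hdet ▸ (isUnit_iff_isUnit_det A).1 hu)

variable [Fintype m] [NonUnitalSemiring R] [StarRing R] {A B : Matrix m n R}

lemma SupportedOnGraph.conjTranspose_mul_apply_eq_zero (hA : SupportedOnGraph σ A)
    (hB : SupportedOnGraph τ B) {j k : n} (h : ∀ i, σ i = j → τ i ≠ k) : (Aᴴ * B) j k = 0 := by
  rw [mul_apply]
  refine Finset.sum_eq_zero fun i _ => ?_
  by_cases hj : σ i = j
  · rw [hB (h i hj), mul_zero]
  · rw [conjTranspose_apply, hA hj, star_zero, zero_mul]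

lemma SupportedOnGraph.isDiag_conjTranspose_mul (hA : SupportedOnGraph σ A)
    (hB : SupportedOnGraph σ B) : (Aᴴ * B).IsDiag :=
  fun _ _ hjk => hA.conjTranspose_mul_apply_eq_zero hB fun _ hj => hj.trans_ne hjk

lemma SupportedOnGraph.diag_conjTranspose_mul_eq_zero (hA : SupportedOnGraph σ A)
    (hB : SupportedOnGraph τ B) (hστ : ∀ i, σ i ≠ τ i) : (Aᴴ * B).diag = 0 :=
  funext fun _ => hA.conjTranspose_mul_apply_eq_zero hB fun i hj => hj ▸ (hστ i).symm

end SupportedOnGraph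

section RowGram

variable {k m n R : Type*}

/-- Row `u` of `V`, reshaped so that the amplitude `⟨u|V|x,s⟩` is the entry `(s, x)`. Having `s`
index the rows makes `Matrix.vec` the inverse operation. -/
def rowMatrix (V : Matrix k (m × n) R) (u : k) : Matrix n m R :=
  of fun s x => V u (x, s)

lemma vec_rowMatrix (V : Matrix k (m × n) R) (u : k) : vec (rowMatrix V u) = V u := rfl

variable [Fintype m] [Fintype n]

lemma rowMatrix_mul_kronecker [NonUnitalCommSemiring R] (V : Matrix k (m × n) R)
    (A : Matrix m m R) (B : Matrix n n R) (u : k) :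
    rowMatrix (V * (A ⊗ₖ B)) u = Bᵀ * rowMatrix V u * A := by
  rw [← vec_inj, ← vec_vecMul_kronecker, vec_rowMatrix, vec_rowMatrix, mul_apply_eq_vecMul]

/-- The Gram matrix of the columns of `rowMatrix V u` against those of `rowMatrix V v`, that is,
the partial inner product of rows `u` and `v` of `V` over the second tensor factor. -/
def rowGram [NonUnitalNonAssocSemiring R] [Star R] (V : Matrix k (m × n) R) (u v : k) :
    Matrix m m R :=
  (rowMatrix V u)ᴴ * rowMatrix V v

lemma trace_rowGram [NonUnitalCommSemiring R] [Star R] (V : Matrix k (m × n) R) (u v : k) :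
    (rowGram V u v).trace = (V * Vᴴ) v u := by
  rw [rowGram, ← star_vec_dotProduct_vec, vec_rowMatrix, vec_rowMatrix, dotProduct_comm]
  rfl

variable [CommRing R] [StarRing R]

lemma trace_rowGram_of_mem_unitaryGroup [DecidableEq m] [DecidableEq n]
    {V : Matrix (m × n) (m × n) R} (hV : V ∈ unitaryGroup (m × n) R) (u v : m × n) :
    (rowGram V u v).trace = (1 : Matrix (m × n) (m × n) R) v u := by
  rw [trace_rowGram, ← star_eq_conjTranspose, mem_unitaryGroup_iff.1 hV]

lemma rowGram_mul_kronecker [DecidableEq n] (V : Matrix k (m × n) R) (A : Matrix m m R)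
    {B : Matrix n n R} (hB : B ∈ unitaryGroup n R) (u v : k) :
    rowGram (V * (A ⊗ₖ B)) u v = Aᴴ * rowGram V u v * A := by
  have hB' : Bᵀᴴ * Bᵀ = 1 := mem_unitaryGroup_iff'.1 (transpose_mem_unitaryGroup_iff.2 hB)
  simp only [rowGram, rowMatrix_mul_kronecker, conjTranspose_mul, Matrix.mul_assoc]
  rw [← Matrix.mul_assoc _ Bᵀ, hB', Matrix.one_mul]

end RowGram

section Rotation

variable {θ : ℝ} {G : Matrix (Fin 2) (Fin 2) ℂ}

lemma det_rot (θ : ℝ) : (Rot θ).det = 1 := by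
  rw [Rot, det_fin_two_of, Complex.ofReal_cos, Complex.ofReal_sin]
  linear_combination Complex.cos_sq_add_sin_sq θ

lemma conjTranspose_rot (θ : ℝ) :
    (Rot θ)ᴴ = !![(Real.cos θ : ℂ), (Real.sin θ : ℂ); -(Real.sin θ : ℂ), (Real.cos θ : ℂ)] := by
  ext i j
  fin_cases i <;> fin_cases j <;> simp [Rot, ← Complex.cos_conj, ← Complex.sin_conj]

lemma two_smul_rot_conj_of_isDiag (θ : ℝ) (hG : G.IsDiag) :
    (2 : ℂ) • ((Rot θ)ᴴ * G * Rot θ) =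
      G.trace • 1 + (G 0 0 - G 1 1) • !![(Real.cos (2 * θ) : ℂ), -(Real.sin (2 * θ) : ℂ);
        -(Real.sin (2 * θ) : ℂ), -(Real.cos (2 * θ) : ℂ)] := by
  have h01 : G 0 1 = 0 := hG (by decide)
  have h10 : G 1 0 = 0 := hG (by decide)
  have hG_eq : G = !![G 0 0, 0; 0, G 1 1] := by
    simpa only [h01, h10] using eta_fin_two G
  have hcs : (Real.cos θ : ℂ) ^ 2 + (Real.sin θ : ℂ) ^ 2 = 1 := by
    exact_mod_cast Real.cos_sq_add_sin_sq θ
  rw [conjTranspose_rot, Rot, hG_eq, Real.sin_two_mul, Real.cos_two_mul', one_fin_two,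
    trace_fin_two_of, mul_fin_two, mul_fin_two]
  ext i j
  fin_cases i <;> fin_cases j <;>
    simp only [Fin.zero_eta, Fin.mk_one, Matrix.smul_apply, Matrix.add_apply, of_apply, cons_val',
      cons_val_zero, cons_val_one, cons_val_fin_one, smul_eq_mul, Complex.ofReal_sub,
      Complex.ofReal_pow, Complex.ofReal_mul, Complex.ofReal_ofNat]
  · linear_combination (G 0 0 + G 1 1) * hcs
  · ring
  · ring
  · linear_combination (G 0 0 + G 1 1) * hcs

lemma eq_trace_div_two_smul_one_of_isDiag_rot_conj (hsin : Real.sin (2 * θ) ≠ 0) (hG : G.IsDiag)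
    (hG' : ((Rot θ)ᴴ * G * Rot θ).IsDiag) : G = (G.trace / 2) • 1 := by
  have h01 : (0 : Fin 2) ≠ 1 := by decide
  have hsin' : Complex.sin (2 * θ) ≠ 0 := by exact_mod_cast hsin
  have heq : G 0 0 = G 1 1 := by
    simpa [hG' h01, hsin', sub_eq_zero] using congrFun₂ (two_smul_rot_conj_of_isDiag θ hG) 0 1
  ext i j
  fin_cases i <;> fin_cases j <;> simp [trace_fin_two, heq, hG h01, hG h01.symm]

lemma eq_zero_of_isDiag_of_diag_rot_conj_eq_zero (hcos : Real.cos (2 * θ) ≠ 0) (hG : G.IsDiag)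
    (hG' : ((Rot θ)ᴴ * G * Rot θ).diag = 0) : G = 0 := by
  have hcos' : Complex.cos (2 * θ) ≠ 0 := by exact_mod_cast hcos
  have hentry (i : Fin 2) : ((Rot θ)ᴴ * G * Rot θ) i i = 0 := congrFun hG' i
  have h := two_smul_rot_conj_of_isDiag θ hG
  have h0 : 0 = G.trace + (G 0 0 - G 1 1) * Complex.cos (2 * θ) := by
    simpa [hentry] using congrFun₂ h 0 0
  have h1 : 0 = G.trace - (G 0 0 - G 1 1) * Complex.cos (2 * θ) := by
    simpa [hentry, sub_eq_add_neg] using congrFun₂ h 1 1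
  have htrace : G 0 0 + G 1 1 = 0 := by
    rw [← trace_fin_two]
    linear_combination -(h0 + h1) / 2
  have heq : G 0 0 = G 1 1 :=
    sub_eq_zero.1 <| mul_right_cancel₀ hcos' <| by linear_combination (h1 - h0) / 2
  have h00 : G 0 0 = 0 := by linear_combination (htrace + heq) / 2
  have h11 : G 1 1 = 0 := heq ▸ h00
  have h01 : (0 : Fin 2) ≠ 1 := by decide
  ext i j
  fin_cases i <;> fin_cases j <;> simp [h00, h11, hG h01, hG h01.symm]

end Rotation

section RotatedRowGram

variable {k n : Type*} [Fintype n] [DecidableEq n] {θ : ℝ} {U : Matrix n n ℂ}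
  {V : Matrix k (Fin 2 × n) ℂ} {u v : k}

lemma rowGram_eq_trace_div_two_smul_one_of_supportedOnGraph {σ τ : n → Fin 2}
    (hU : U ∈ unitaryGroup n ℂ) (hsin : Real.sin (2 * θ) ≠ 0)
    (hσu : SupportedOnGraph σ (rowMatrix V u)) (hσv : SupportedOnGraph σ (rowMatrix V v))
    (hτu : SupportedOnGraph τ (rowMatrix (V * (Rot θ ⊗ₖ U)) u))
    (hτv : SupportedOnGraph τ (rowMatrix (V * (Rot θ ⊗ₖ U)) v)) :
    rowGram V u v = ((rowGram V u v).trace / 2) • 1 := by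
  have hdiag : (rowGram V u v).IsDiag := hσu.isDiag_conjTranspose_mul hσv
  refine eq_trace_div_two_smul_one_of_isDiag_rot_conj hsin hdiag ?_
  rw [← rowGram_mul_kronecker V _ hU]
  exact hτu.isDiag_conjTranspose_mul hτv

lemma rowGram_eq_zero_of_supportedOnGraph_of_forall_ne {σ τ τ' : n → Fin 2}
    (hU : U ∈ unitaryGroup n ℂ) (hcos : Real.cos (2 * θ) ≠ 0)
    (hσu : SupportedOnGraph σ (rowMatrix V u)) (hσv : SupportedOnGraph σ (rowMatrix V v))
    (hτu : SupportedOnGraph τ (rowMatrix (V * (Rot θ ⊗ₖ U)) u))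
    (hτv : SupportedOnGraph τ' (rowMatrix (V * (Rot θ ⊗ₖ U)) v)) (hττ' : ∀ s, τ s ≠ τ' s) :
    rowGram V u v = 0 := by
  have hdiag : (rowGram V u v).IsDiag := hσu.isDiag_conjTranspose_mul hσv
  refine eq_zero_of_isDiag_of_diag_rot_conj_eq_zero hcos hdiag ?_
  rw [← rowGram_mul_kronecker V _ hU]
  exact hτu.diag_conjTranspose_mul_eq_zero hτv hττ'

end RotatedRowGram

lemma exists_eq_int_mul_pi_div_four {θ : ℝ} (h : Real.sin (2 * θ) = 0 ∨ Real.cos (2 * θ) = 0) :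
    ∃ k : ℤ, θ = k * (Real.pi / 4) := by
  have h4 : Real.sin (4 * θ) = 0 := by
    rw [show 4 * θ = 2 * (2 * θ) by ring, Real.sin_two_mul]
    rcases h with h | h <;> simp [h]
  obtain ⟨k, hk⟩ := Real.sin_eq_zero_iff.1 h4
  exact ⟨k, by linarith⟩

section Attack

variable {d : ℕ} {θ : ℝ}

lemma psi_apply (U : Matrix (Fin d) (Fin d) ℂ) (V : Matrix (Fin 2 × Fin d) (Fin 2 × Fin d) ℂ)
    (b x : Fin 2) (s : Fin d) (u : Fin 2 × Fin d) :
    psi d θ U V b x s u = rowMatrix (V * (Rot θ ⊗ₖ U) ^ (b : ℕ)) u s x := by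
  simp [psi, rowMatrix]

variable {U : Matrix (Fin d) (Fin d) ℂ} {V : Matrix (Fin 2 × Fin d) (Fin 2 × Fin d) ℂ}

lemma DDC.exists_supportedOnGraph_rowMatrix (h : DDC d θ U V) (u : Fin 2 × Fin d) :
    ∃ σ, SupportedOnGraph σ (rowMatrix V u) :=
  exists_supportedOnGraph_of_apply_eq_zero_or fun s => by simpa [psi_apply] using h u s 0

lemma DDC.exists_supportedOnGraph_rowMatrix_mul_kronecker (h : DDC d θ U V) (u : Fin 2 × Fin d) :
    ∃ τ, SupportedOnGraph τ (rowMatrix (V * (Rot θ ⊗ₖ U)) u) :=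
  exists_supportedOnGraph_of_apply_eq_zero_or fun s => by simpa [psi_apply] using h u s 1

lemma DDC.rowGram_self_eq_half_smul_one (h : DDC d θ U V) (hU : U ∈ unitaryGroup (Fin d) ℂ)
    (hV : V ∈ unitaryGroup (Fin 2 × Fin d) ℂ) (hsin : Real.sin (2 * θ) ≠ 0) (u : Fin 2 × Fin d) :
    rowGram V u u = (1 / 2 : ℂ) • 1 := by
  obtain ⟨σ, hσ⟩ := h.exists_supportedOnGraph_rowMatrix u
  obtain ⟨τ, hτ⟩ := h.exists_supportedOnGraph_rowMatrix_mul_kronecker u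
  rw [rowGram_eq_trace_div_two_smul_one_of_supportedOnGraph hU hsin hσ hσ hτ hτ,
    trace_rowGram_of_mem_unitaryGroup hV, one_apply_eq]

lemma rowGram_eq_zero_of_supportedOnGraph_of_ne {σ τ : Fin d → Fin 2} {u v : Fin 2 × Fin d}
    (hU : U ∈ unitaryGroup (Fin d) ℂ) (hV : V ∈ unitaryGroup (Fin 2 × Fin d) ℂ)
    (hsin : Real.sin (2 * θ) ≠ 0) (huv : u ≠ v)
    (hσu : SupportedOnGraph σ (rowMatrix V u)) (hσv : SupportedOnGraph σ (rowMatrix V v))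
    (hτu : SupportedOnGraph τ (rowMatrix (V * (Rot θ ⊗ₖ U)) u))
    (hτv : SupportedOnGraph τ (rowMatrix (V * (Rot θ ⊗ₖ U)) v)) :
    rowGram V u v = 0 := by
  rw [rowGram_eq_trace_div_two_smul_one_of_supportedOnGraph hU hsin hσu hσv hτu hτv,
    trace_rowGram_of_mem_unitaryGroup hV, one_apply_ne' huv, zero_div, zero_smul]

end Attack

section TwoDimensional

variable {θ : ℝ} {U : Matrix (Fin 2) (Fin 2) ℂ} {V : Matrix (Fin 2 × Fin 2) (Fin 2 × Fin 2) ℂ}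

lemma DDC.isUnit_rowMatrix (h : DDC 2 θ U V) (hU : U ∈ unitaryGroup (Fin 2) ℂ)
    (hV : V ∈ unitaryGroup (Fin 2 × Fin 2) ℂ) (hsin : Real.sin (2 * θ) ≠ 0) (u : Fin 2 × Fin 2) :
    IsUnit (rowMatrix V u) := by
  have hGram : IsUnit (rowGram V u u) := by
    rw [h.rowGram_self_eq_half_smul_one hU hV hsin]
    exact isUnit_one.smul (Units.mk0 (1 / 2 : ℂ) (by norm_num))
  exact isUnit_of_mul_isUnit_right hGram

lemma DDC.isUnit_rowGram (h : DDC 2 θ U V) (hU : U ∈ unitaryGroup (Fin 2) ℂ)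
    (hV : V ∈ unitaryGroup (Fin 2 × Fin 2) ℂ) (hsin : Real.sin (2 * θ) ≠ 0)
    (u v : Fin 2 × Fin 2) : IsUnit (rowGram V u v) :=
  ((isUnit_conjTranspose _).2 (h.isUnit_rowMatrix hU hV hsin u)).mul
    (h.isUnit_rowMatrix hU hV hsin v)

lemma DDC.exists_perm_supportedOnGraph (h : DDC 2 θ U V) (hU : U ∈ unitaryGroup (Fin 2) ℂ)
    (hV : V ∈ unitaryGroup (Fin 2 × Fin 2) ℂ) (hsin : Real.sin (2 * θ) ≠ 0) (u : Fin 2 × Fin 2) :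
    ∃ σ τ : Equiv.Perm (Fin 2), SupportedOnGraph σ (rowMatrix V u) ∧
      SupportedOnGraph τ (rowMatrix (V * (Rot θ ⊗ₖ U)) u) := by
  obtain ⟨σ, hσ⟩ := h.exists_supportedOnGraph_rowMatrix u
  obtain ⟨τ, hτ⟩ := h.exists_supportedOnGraph_rowMatrix_mul_kronecker u
  have hunit := h.isUnit_rowMatrix hU hV hsin u
  have hunit_U : IsUnit U := .of_mul_eq_one _ (mem_unitaryGroup_iff.1 hU)
  have hunit_Rot : IsUnit (Rot θ) := by simp [isUnit_iff_isUnit_det, det_rot]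
  have hunit_mul : IsUnit (rowMatrix (V * (Rot θ ⊗ₖ U)) u) := by
    rw [rowMatrix_mul_kronecker]
    exact (((isUnit_transpose U).2 hunit_U).mul hunit).mul hunit_Rot
  exact ⟨.ofBijective σ (hσ.surjective_of_isUnit hunit).bijective_of_finite,
    .ofBijective τ (hτ.surjective_of_isUnit hunit_mul).bijective_of_finite, hσ, hτ⟩

end TwoDimensional

/-- For `d = 2`, if an attack strategy `(U, V)` (with `U`, `V` unitary) satisfies the
DDC, then `θ` is an integer multiple of `π/4`. -/
theorem stmt_0 (θ : ℝ) (U : Matrix (Fin 2) (Fin 2) ℂ)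
    (V : Matrix (Fin 2 × Fin 2) (Fin 2 × Fin 2) ℂ)
    (hU : U ∈ Matrix.unitaryGroup (Fin 2) ℂ)
    (hV : V ∈ Matrix.unitaryGroup (Fin 2 × Fin 2) ℂ)
    (hDDC : DDC 2 θ U V) :
    ∃ k : ℤ, θ = k * (Real.pi / 4) := by
  apply exists_eq_int_mul_pi_div_four
  by_contra! hsin_cos
  obtain ⟨hsin, hcos⟩ := hsin_cos
  have hgram_ne (u v) : rowGram V u v ≠ 0 := (hDDC.isUnit_rowGram hU hV hsin u v).ne_zero
  choose σ τ hσ hτ using hDDC.exists_perm_supportedOnGraph hU hV hsin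
  have hinj : Function.Injective fun u => (σ u, τ u) := by
    intro u v huv
    obtain ⟨hσ_eq, hτ_eq⟩ := Prod.mk.inj huv
    by_contra hne
    exact hgram_ne u v <| rowGram_eq_zero_of_supportedOnGraph_of_ne hU hV hsin hne
      (hσ u) (hσ_eq ▸ hσ v) (hτ u) (hτ_eq ▸ hτ v)
  have hsurj : Function.Surjective fun u => (σ u, τ u) :=
    ((Fintype.bijective_iff_injective_and_card _).2 ⟨hinj, by decide⟩).surjective
  obtain ⟨u, hu⟩ := hsurj (1, 1)
  obtain ⟨v, hv⟩ := hsurj (1, Equiv.swap 0 1)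
  obtain ⟨hσu, hτu⟩ := Prod.mk.inj hu
  obtain ⟨hσv, hτv⟩ := Prod.mk.inj hv
  refine hgram_ne u v <| rowGram_eq_zero_of_supportedOnGraph_of_forall_ne hU hcos
    (hσ u) (hσu.trans hσv.symm ▸ hσ v) (hτ u) (hτ v) ?_
  rw [hτu, hτv]
  decide
end

section
/- Let θ ∈ ℝ and let d = 3. Suppose U is a 3×3 unitary complex matrix and V is a 6×6 unitary complex matrix such that the deterministic distinguishability condition (DDC) holds for the output states |ψ_b(x,s)⟩ = V (R_θ ⊗ U)^b (|x⟩ ⊗ |s⟩). Then θ is an integer multiple of π/2, i.e. there exists k ∈ ℤ with θ = kπ/2 (so only classical protocols can be broken exactly with a maximally entangled qutrit). -/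
open Matrix
open scoped Kronecker Classical

/-!
Arrange the amplitudes `⟨u| V |x, s⟩` of an outcome `u` into a `2 × d` matrix `M`; replacing `V` by
`V (R ⊗ U)` replaces `M` by `Rᵀ M U`. The condition says that both matrices have rows with disjoint
supports, so `M Mᴴ` and its conjugate by the unitary `Rᵀ` are diagonal. If the first row of `R` has
no zero entry, this forces `M Mᴴ = 1/2`, and likewise for `Rᵀ M U`.

For `d = 3`, orthogonality of the columns of `V` then leaves exactly one nonzero entry in each row
of `M`, and similarly in each row of `Rᵀ M U`. So each row of `Rᵀ M = (Rᵀ M U) Uᴴ` is a nonzero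
multiple of a conjugated column of `U`. An outcome for which column `r` of `M` vanishes gives two
zeros in row `r` of `U`, and an outcome for which it does not gives two nonzero entries: four
entries in a row of length three.
-/

lemma exists_apply_eq_apply_of_card_lt_add_card {α β γ : Type*} [Fintype α] [Fintype β]
    [Fintype γ] (h : Fintype.card γ < Fintype.card α + Fintype.card β) (σ : α ↪ γ) (τ : β ↪ γ) :
    ∃ a b, σ a = τ b := by
  by_contra! hne
  have hcard := Fintype.card_le_of_injective _ (σ.injective.sumElim τ.injective hne)
  rw [Fintype.card_sum] at hcard
  exact hcard.not_gt h

lemma exists_compl_pair_eq_singleton {ι : Type*} [Fintype ι] [DecidableEq ι]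
    (hι : Fintype.card ι = 3) {s s' : ι} (hss' : s ≠ s') : ∃ r, ({s, s'} : Finset ι)ᶜ = {r} := by
  rw [← Finset.card_eq_one, Finset.card_compl, Finset.card_pair hss', hι]

lemma mul_mul_mul_conjTranspose_of_mul_conjTranspose_eq_one {l m n n' R : Type*} [Semiring R]
    [StarRing R] [Fintype m] [Fintype n] [Fintype n'] [DecidableEq n] {U : Matrix n n' R}
    (hU : U * Uᴴ = 1) (Q : Matrix l m R) (M : Matrix m n R) :
    (Q * M * U) * (Q * M * U)ᴴ = Q * (M * Mᴴ) * Qᴴ := by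
  rw [conjTranspose_mul, ← Matrix.mul_assoc, Matrix.mul_assoc (Q * M) U, hU, Matrix.mul_one,
    conjTranspose_mul]
  simp only [Matrix.mul_assoc]

section AmplitudeMatrix

variable {m κ κ' ι ι' R : Type*}

/-- The row `u` of a matrix with columns indexed by `κ × ι`, reshaped into a `κ × ι` matrix: for an
attack unitary `V`, its entry at `(x, s)` is the amplitude `⟨u| V |x, s⟩`. -/
def amplitudeMatrix (V : Matrix m (κ × ι) R) (u : m) : Matrix κ ι R :=
  of (Function.curry (V u))

lemma amplitudeMatrix_apply (V : Matrix m (κ × ι) R) (u : m) (x : κ) (s : ι) :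
    amplitudeMatrix V u x s = V u (x, s) :=
  rfl

lemma amplitudeMatrix_mul_kronecker [CommSemiring R] [Fintype κ] [Fintype ι]
    (V : Matrix m (κ × ι) R) (A : Matrix κ κ' R) (B : Matrix ι ι' R) (u : m) :
    amplitudeMatrix (V * (A ⊗ₖ B)) u = Aᵀ * amplitudeMatrix V u * B := by
  have hrow : (V * (A ⊗ₖ B)) u = vec (Aᵀ * amplitudeMatrix V u * B)ᵀ := by
    rw [transpose_mul, transpose_mul, transpose_transpose, ← Matrix.mul_assoc]
    exact vec_vecMul_kronecker B (amplitudeMatrix V u)ᵀ A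
  ext x s
  exact congrFun hrow (x, s)

lemma trace_amplitudeMatrix_mul_conjTranspose [Semiring R] [StarRing R] [Fintype κ] [Fintype ι]
    (V : Matrix m (κ × ι) R) (u : m) :
    (amplitudeMatrix V u * (amplitudeMatrix V u)ᴴ).trace = (V * Vᴴ) u u := by
  simp [trace, mul_apply, Fintype.sum_prod_type, amplitudeMatrix_apply]

/-- The rows of the matrix have pairwise disjoint supports. For the amplitude matrix of an outcome
`u` this is the distinguishability condition: `u` and `s` together determine `x`. -/
def HasDisjointRows [Zero R] (M : Matrix κ ι R) : Prop :=
  ∀ s, Pairwise fun x y => M x s = 0 ∨ M y s = 0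

lemma HasDisjointRows.isDiag_mul_conjTranspose [Semiring R] [StarRing R] [Fintype ι]
    {M : Matrix κ ι R} (hM : HasDisjointRows M) : (M * Mᴴ).IsDiag := by
  intro x y hxy
  rw [mul_apply]
  refine Finset.sum_eq_zero fun s _ => ?_
  rcases hM s hxy with h | h <;> simp [h]

end AmplitudeMatrix

section Field

variable {ι F : Type*} [Field F] [StarRing F]

lemma apply_zero_eq_apply_one_of_isDiag_conj {Q D : Matrix (Fin 2) (Fin 2) F} (hQ : Q * Qᴴ = 1)
    (h0 : Q 0 0 ≠ 0) (h1 : Q 1 0 ≠ 0) (hD : D.IsDiag) (hQD : (Q * D * Qᴴ).IsDiag) :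
    D 0 0 = D 1 1 := by
  have horth : Q 0 0 * star (Q 1 0) + Q 0 1 * star (Q 1 1) = 0 := by
    simpa [mul_apply] using congrFun₂ hQ 0 1
  have hdiag : Q 0 0 * D 0 0 * star (Q 1 0) + Q 0 1 * D 1 1 * star (Q 1 1) = 0 := by
    have h01 : D 0 1 = 0 := hD zero_ne_one
    have h10 : D 1 0 = 0 := hD one_ne_zero
    simpa [mul_apply, h01, h10] using hQD zero_ne_one
  have hprod : Q 0 0 * star (Q 1 0) * (D 0 0 - D 1 1) = 0 := by
    linear_combination hdiag - D 1 1 * horth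
  exact sub_eq_zero.mp ((mul_eq_zero.mp hprod).resolve_left (by simp [h0, h1]))

variable [Fintype ι] [DecidableEq ι]

lemma mul_conjTranspose_eq_half {Q : Matrix (Fin 2) (Fin 2) F}
    (hQ : Q * Qᴴ = 1) (h0 : Q 0 0 ≠ 0) (h1 : Q 1 0 ≠ 0) {U : Matrix ι ι F} (hU : U * Uᴴ = 1)
    {M : Matrix (Fin 2) ι F} (htr : (M * Mᴴ).trace = 1) (hM : HasDisjointRows M)
    (hQMU : HasDisjointRows (Q * M * U)) : M * Mᴴ = (1 / 2 : F) • 1 := by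
  have hdiag : (M * Mᴴ).IsDiag := hM.isDiag_mul_conjTranspose
  have hconj : (Q * (M * Mᴴ) * Qᴴ).IsDiag := by
    rw [← mul_mul_mul_conjTranspose_of_mul_conjTranspose_eq_one hU Q M]
    exact hQMU.isDiag_mul_conjTranspose
  have heq := apply_zero_eq_apply_one_of_isDiag_conj hQ h0 h1 hdiag hconj
  have hhalf : (M * Mᴴ) 0 0 = 1 / 2 := by
    rw [trace_fin_two, ← heq, ← two_mul] at htr
    exact eq_one_div_of_mul_eq_one_right htr
  ext x y
  fin_cases x <;> fin_cases y
  · simpa using hhalf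
  · simpa using hdiag zero_ne_one
  · simpa using hdiag one_ne_zero
  · simpa using heq.symm.trans hhalf

lemma apply_eq_zero_iff_of_mul_apply_ne_zero_iff {κ : Type*} {U : Matrix ι ι F}
    (hU : U * Uᴴ = 1) {A : Matrix κ ι F} {x : κ} {t : ι} (ht : ∀ s, (A * U) x s ≠ 0 ↔ s = t)
    (s : ι) : U s t = 0 ↔ A x s = 0 := by
  have hA : A x s = (A * U) x t * star (U s t) := by
    calc A x s = (A * U * Uᴴ) x s := by rw [Matrix.mul_assoc, hU, Matrix.mul_one]
      _ = (A * U) x t * star (U s t) :=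
        Fintype.sum_eq_single t fun b hb =>
          mul_eq_zero_of_left (not_ne_iff.mp (mt (ht b).mp hb)) _
  simp [hA, (ht t).mpr rfl]

end Field

section Orthogonality

variable {m n 𝕜 : Type*} [Fintype m] [RCLike 𝕜]

lemma mul_conjTranspose_apply_self (M : Matrix n m 𝕜) (i : n) :
    (M * Mᴴ) i i = ((∑ j, ‖M i j‖ ^ 2 : ℝ) : 𝕜) := by
  simp [mul_apply, RCLike.mul_conj]

lemma sum_norm_sq_row_eq_half [DecidableEq n] {M : Matrix n m 𝕜}
    (hM : M * Mᴴ = (1 / 2 : 𝕜) • 1) (i : n) : ∑ j, ‖M i j‖ ^ 2 = 1 / 2 := by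
  refine RCLike.ofReal_injective (K := 𝕜) ?_
  rw [← mul_conjTranspose_apply_self M i, hM, Matrix.smul_apply, one_apply_eq]
  simp only [smul_eq_mul, mul_one, RCLike.ofReal_div, RCLike.ofReal_one, RCLike.ofReal_ofNat]

lemma sum_norm_sq_col_eq_one [DecidableEq n] {V : Matrix m n 𝕜} (hV : Vᴴ * V = 1) (j : n) :
    ∑ u, ‖V u j‖ ^ 2 = 1 := by
  have h := mul_conjTranspose_apply_self Vᴴ j
  rw [conjTranspose_conjTranspose, hV, one_apply_eq] at h
  simpa using (RCLike.ofReal_injective (K := 𝕜) (by simpa using h)).symm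

lemma eq_zero_of_sum_norm_sq_eq_one {E : Type*} [NormedAddCommGroup E] {h : m → E}
    (hh : ∑ w, ‖h w‖ ^ 2 = 1) {u v : m} (huv : u ≠ v) (hu : ‖h u‖ ^ 2 = 1 / 2)
    (hv : ‖h v‖ ^ 2 = 1 / 2) {w : m} (hwu : w ≠ u) (hwv : w ≠ v) : h w = 0 := by
  have hle : ∑ i ∈ {w, u, v}, ‖h i‖ ^ 2 ≤ ∑ i, ‖h i‖ ^ 2 :=
    Finset.sum_le_sum_of_subset_of_nonneg (Finset.subset_univ _) fun i _ _ => sq_nonneg _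
  rw [Finset.sum_insert (by simp [hwu, hwv]), Finset.sum_pair huv, hu, hv, hh] at hle
  have hsq : ‖h w‖ ^ 2 = 0 := le_antisymm (by linarith) (sq_nonneg _)
  simpa using hsq

/- The vectors orthogonal to `(p, q)` form a line, so orthogonal `(a, a')` and `(b, b')` in it
cannot both be nonzero; `‖p‖ = ‖q‖` makes the two summands of their inner product equal. -/
lemma star_mul_eq_zero_of_orthogonal {p q a a' b b' : 𝕜} (hp : p ≠ 0) (hpq : ‖p‖ = ‖q‖)
    (ha : star p * a + star q * a' = 0) (hb : star p * b + star q * b' = 0)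
    (hab : star a * b + star a' * b' = 0) : star a * b = 0 := by
  have hnorm : star q * q = star p * p := by
    simp only [RCLike.star_def, RCLike.conj_mul, hpq]
  have ha' : star a * p + star a' * q = 0 := by simpa [mul_comm] using congrArg star ha
  have hmul : star p * p * (star a' * b' - star a * b) = 0 := by
    linear_combination (-star a' * b') * hnorm + (star a' * q) * hb - (star p * b) * ha'
  have heq : star a' * b' = star a * b :=
    sub_eq_zero.mp ((mul_eq_zero.mp hmul).resolve_left (by simp [hp]))
  rw [heq, ← two_mul] at hab
  exact (mul_eq_zero.mp hab).resolve_left two_ne_zero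

/- If `f u * g u ≠ 0`, then `f ⟂ g` provides a second such index `v`; now `h` lives on `{u, v}`
alone, and orthogonality of the three vectors there contradicts `f u * g u ≠ 0`. -/
lemma mul_eq_zero_of_orthogonal_of_norm_sq_eq_half {f g h : m → 𝕜} (hfg : star f ⬝ᵥ g = 0)
    (hhf : star h ⬝ᵥ f = 0) (hhg : star h ⬝ᵥ g = 0) (hh : ∑ w, ‖h w‖ ^ 2 = 1)
    (hhalf : ∀ w, f w * g w ≠ 0 → ‖h w‖ ^ 2 = 1 / 2) : f * g = 0 := by
  funext u
  by_contra hu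
  obtain ⟨v, hvu, hv⟩ : ∃ v, v ≠ u ∧ f v * g v ≠ 0 := by
    by_contra! hall
    have hsingle : star f ⬝ᵥ g = star (f u) * g u :=
      Fintype.sum_eq_single u fun w hw => by simpa using hall w hw
    exact hu (by simpa using hsingle.symm.trans hfg)
  have hhz : ∀ w, w ≠ u ∧ w ≠ v → h w = 0 := fun w hw =>
    eq_zero_of_sum_norm_sq_eq_one hh hvu.symm (hhalf u hu) (hhalf v hv) hw.1 hw.2
  have hfgz : ∀ w, w ≠ u ∧ w ≠ v → f w * g w = 0 := by
    intro w hw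
    by_contra hne
    simpa [hhz w hw] using hhalf w hne
  have hpair : ∀ {a b : m → 𝕜}, star a ⬝ᵥ b = 0 → (∀ w, w ≠ u ∧ w ≠ v → star (a w) * b w = 0) →
      star (a u) * b u + star (a v) * b v = 0 := fun hab hz =>
    (Fintype.sum_eq_add u v hvu.symm hz).symm.trans hab
  have hnorm : ‖h u‖ = ‖h v‖ :=
    (sq_eq_sq₀ (norm_nonneg _) (norm_nonneg _)).mp ((hhalf u hu).trans (hhalf v hv).symm)
  have hhu : h u ≠ 0 := fun h0 => by simpa [h0] using hhalf u hu
  have hzero : star (f u) * g u = 0 :=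
    star_mul_eq_zero_of_orthogonal hhu hnorm (hpair hhf fun w hw => by simp [hhz w hw])
      (hpair hhg fun w hw => by simp [hhz w hw]) (hpair hfg fun w hw => by simpa using hfgz w hw)
  exact hu (by simpa using hzero)

end Orthogonality

section Qutrit

variable {m κ ι 𝕜 : Type*} [Fintype m] [DecidableEq κ] [Nontrivial κ] [Fintype ι]
  [DecidableEq ι] [RCLike 𝕜] {V : Matrix m (κ × ι) 𝕜}

/- If row `x` were nonzero at `s` and `s'`, a second row `y` would be supported on the third index
`r`, so the columns `(x, s)`, `(x, s')` and `(y, r)` of `V` could not be orthogonal. -/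
lemma eq_of_amplitudeMatrix_apply_ne_zero (hι : Fintype.card ι = 3) (hV : Vᴴ * V = 1)
    (hd : ∀ u, HasDisjointRows (amplitudeMatrix V u))
    (hhalf : ∀ u, amplitudeMatrix V u * (amplitudeMatrix V u)ᴴ = (1 / 2 : 𝕜) • 1) {u : m} {x : κ}
    {s s' : ι} (hs : amplitudeMatrix V u x s ≠ 0) (hs' : amplitudeMatrix V u x s' ≠ 0) :
    s = s' := by
  by_contra hss'
  obtain ⟨r, hr⟩ := exists_compl_pair_eq_singleton hι hss'
  obtain ⟨y, hy⟩ := exists_ne x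
  have horth : ∀ i j, i ≠ j → star (V.col i) ⬝ᵥ V.col j = 0 := fun i j hij =>
    (congrFun₂ hV i j).trans (one_apply_ne hij)
  have hcol : ∀ w, V w (x, s) * V w (x, s') ≠ 0 → ‖V w (y, r)‖ ^ 2 = 1 / 2 := by
    intro w hw
    have hys : V w (y, s) = 0 := (hd w s hy).resolve_right (left_ne_zero_of_mul hw)
    have hys' : V w (y, s') = 0 := (hd w s' hy).resolve_right (right_ne_zero_of_mul hw)
    rw [← sum_norm_sq_row_eq_half (hhalf w) y, ← Finset.sum_add_sum_compl {s, s'}, hr,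
      Finset.sum_pair hss']
    simp [amplitudeMatrix_apply, hys, hys']
  have hprod : V.col (x, s) * V.col (x, s') = 0 :=
    mul_eq_zero_of_orthogonal_of_norm_sq_eq_half (horth _ _ (by simp [hss']))
      (horth (y, r) _ (by simp [hy])) (horth (y, r) _ (by simp [hy]))
      (sum_norm_sq_col_eq_one hV _) hcol
  exact mul_ne_zero hs hs' (congrFun hprod u)

lemma exists_embedding_amplitudeMatrix_apply_ne_zero_iff (hι : Fintype.card ι = 3)
    (hV : Vᴴ * V = 1) (hd : ∀ u, HasDisjointRows (amplitudeMatrix V u))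
    (hhalf : ∀ u, amplitudeMatrix V u * (amplitudeMatrix V u)ᴴ = (1 / 2 : 𝕜) • 1) (u : m) :
    ∃ σ : κ ↪ ι, ∀ x s, amplitudeMatrix V u x s ≠ 0 ↔ s = σ x := by
  have hne : ∀ x, ∃ s, amplitudeMatrix V u x s ≠ 0 := by
    intro x
    by_contra! hzero
    have hsum := sum_norm_sq_row_eq_half (hhalf u) x
    simp only [hzero] at hsum
    norm_num at hsum
  choose σ hσ using hne
  have hinj : Function.Injective σ := by
    intro x y hxy
    by_contra hne
    exact (hd u (σ x) hne).elim (hσ x) (hxy ▸ hσ y)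
  refine ⟨⟨σ, hinj⟩, fun x s => ⟨fun hs => ?_, fun hs => hs ▸ hσ x⟩⟩
  exact eq_of_amplitudeMatrix_apply_ne_zero hι hV hd hhalf hs (hσ x)

lemma exists_col_amplitudeMatrix_eq_zero [Fintype κ] (hκ : Fintype.card κ < 3)
    (hι : Fintype.card ι = 3) (hV : Vᴴ * V = 1) (hd : ∀ u, HasDisjointRows (amplitudeMatrix V u))
    (hhalf : ∀ u, amplitudeMatrix V u * (amplitudeMatrix V u)ᴴ = (1 / 2 : 𝕜) • 1) (u : m) :
    ∃ r, ∀ x, amplitudeMatrix V u x r = 0 := by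
  obtain ⟨σ, hσ⟩ := exists_embedding_amplitudeMatrix_apply_ne_zero_iff hι hV hd hhalf u
  have hsurj : ¬ Function.Surjective σ := fun h =>
    hκ.not_ge (hι ▸ Fintype.card_le_of_surjective σ h)
  obtain ⟨r, hr⟩ := not_forall.mp hsurj
  exact ⟨r, fun x => by_contra fun h => hr ⟨x, ((hσ x r).mp h).symm⟩⟩

end Qutrit

section Attack

variable {ι 𝕜 : Type*} [Fintype ι] [DecidableEq ι] [RCLike 𝕜] {R : Matrix (Fin 2) (Fin 2) 𝕜}
  {U : Matrix ι ι 𝕜} {V : Matrix (Fin 2 × ι) (Fin 2 × ι) 𝕜}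

lemma amplitudeMatrix_mul_conjTranspose_eq_half (hR : R ∈ unitaryGroup (Fin 2) 𝕜)
    (hU : U ∈ unitaryGroup ι 𝕜) (hV : V ∈ unitaryGroup (Fin 2 × ι) 𝕜) (h0 : R 0 0 ≠ 0)
    (h1 : R 0 1 ≠ 0) {u : Fin 2 × ι} (hd₀ : HasDisjointRows (amplitudeMatrix V u))
    (hd₁ : HasDisjointRows (amplitudeMatrix (V * (R ⊗ₖ U)) u)) :
    amplitudeMatrix V u * (amplitudeMatrix V u)ᴴ = (1 / 2 : 𝕜) • 1 := by
  have hQ : Rᵀ * Rᵀᴴ = 1 := mem_unitaryGroup_iff.mp (transpose_mem_unitaryGroup_iff.mpr hR)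
  rw [amplitudeMatrix_mul_kronecker] at hd₁
  refine mul_conjTranspose_eq_half hQ h0 h1 (mem_unitaryGroup_iff.mp hU) ?_ hd₀ hd₁
  rw [trace_amplitudeMatrix_mul_conjTranspose, ← star_eq_conjTranspose,
    mem_unitaryGroup_iff.mp hV, one_apply_eq]

lemma exists_embedding_apply_eq_zero_iff (hι : Fintype.card ι = 3)
    (hR : R ∈ unitaryGroup (Fin 2) 𝕜) (hU : U ∈ unitaryGroup ι 𝕜)
    (hV : V ∈ unitaryGroup (Fin 2 × ι) 𝕜)
    (hd₁ : ∀ u, HasDisjointRows (amplitudeMatrix (V * (R ⊗ₖ U)) u))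
    (hhalf : ∀ u, amplitudeMatrix V u * (amplitudeMatrix V u)ᴴ = (1 / 2 : 𝕜) • 1)
    (u : Fin 2 × ι) :
    ∃ σ : Fin 2 ↪ ι, ∀ x s, U s (σ x) = 0 ↔ (Rᵀ * amplitudeMatrix V u) x s = 0 := by
  have hQ : Rᵀ * Rᵀᴴ = 1 := mem_unitaryGroup_iff.mp (transpose_mem_unitaryGroup_iff.mpr hR)
  have hUU : U * Uᴴ = 1 := mem_unitaryGroup_iff.mp hU
  have hW : V * (R ⊗ₖ U) ∈ unitaryGroup (Fin 2 × ι) 𝕜 := mul_mem hV (kronecker_mem_unitary hR hU)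
  have hWhalf : ∀ w, amplitudeMatrix (V * (R ⊗ₖ U)) w * (amplitudeMatrix (V * (R ⊗ₖ U)) w)ᴴ =
      (1 / 2 : 𝕜) • 1 := fun w => by
    rw [amplitudeMatrix_mul_kronecker,
      mul_mul_mul_conjTranspose_of_mul_conjTranspose_eq_one hUU, hhalf, Matrix.mul_smul,
      Matrix.smul_mul, Matrix.mul_one, hQ]
  obtain ⟨σ, hσ⟩ := exists_embedding_amplitudeMatrix_apply_ne_zero_iff hι
    (mem_unitaryGroup_iff'.mp hW) hd₁ hWhalf u
  rw [amplitudeMatrix_mul_kronecker] at hσ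
  exact ⟨σ, fun x => apply_eq_zero_iff_of_mul_apply_ne_zero_iff hUU (hσ x)⟩

theorem stmt_1_general (hι : Fintype.card ι = 3) (hR : R ∈ unitaryGroup (Fin 2) 𝕜)
    (hU : U ∈ unitaryGroup ι 𝕜) (hV : V ∈ unitaryGroup (Fin 2 × ι) 𝕜)
    (hd₀ : ∀ u, HasDisjointRows (amplitudeMatrix V u))
    (hd₁ : ∀ u, HasDisjointRows (amplitudeMatrix (V * (R ⊗ₖ U)) u)) :
    R 0 0 = 0 ∨ R 0 1 = 0 := by
  by_contra! ⟨h0, h1⟩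
  have hhalf := fun u => amplitudeMatrix_mul_conjTranspose_eq_half hR hU hV h0 h1 (hd₀ u) (hd₁ u)
  have hVV : Vᴴ * V = 1 := mem_unitaryGroup_iff'.mp hV
  obtain ⟨s⟩ : Nonempty ι := Fintype.card_pos_iff.mp (hι ▸ three_pos)
  obtain ⟨r, hr⟩ := exists_col_amplitudeMatrix_eq_zero (by simp) hι hVV hd₀ hhalf (0, s)
  obtain ⟨v, hv⟩ : ∃ v, amplitudeMatrix V v 0 r ≠ 0 := by
    by_contra! hzero
    have hsum := sum_norm_sq_col_eq_one hVV (0, r)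
    simp [← amplitudeMatrix_apply, hzero] at hsum
  have hv1 : amplitudeMatrix V v 1 r = 0 := (hd₀ v r zero_ne_one).resolve_left hv
  obtain ⟨σ, hσ⟩ := exists_embedding_apply_eq_zero_iff hι hR hU hV hd₁ hhalf (0, s)
  obtain ⟨τ, hτ⟩ := exists_embedding_apply_eq_zero_iff hι hR hU hV hd₁ hhalf v
  have hσr : ∀ x, U r (σ x) = 0 := fun x => (hσ x r).mpr (by simp [mul_apply, hr])
  have hτr : ∀ x, U r (τ x) ≠ 0 := fun x => by
    rw [ne_eq, hτ, mul_apply, Fin.sum_univ_two, hv1, mul_zero, add_zero]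
    refine mul_ne_zero ?_ hv
    fin_cases x <;> assumption
  obtain ⟨x, y, hxy⟩ := exists_apply_eq_apply_of_card_lt_add_card (by simp [hι]) σ τ
  exact hτr y (hxy ▸ hσr x)

end Attack

lemma DDC.hasDisjointRows {d : ℕ} {θ : ℝ} {U : Matrix (Fin d) (Fin d) ℂ}
    {V : Matrix (Fin 2 × Fin d) (Fin 2 × Fin d) ℂ} (h : DDC d θ U V) (b : Fin 2)
    (u : Fin 2 × Fin d) : HasDisjointRows (amplitudeMatrix (V * (Rot θ ⊗ₖ U) ^ (b : ℕ)) u) := by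
  intro s x y hxy
  have hb := h u s b
  simp only [psi, mulVec_single_one, col_apply] at hb
  fin_cases x <;> fin_cases y
  · exact absurd rfl hxy
  · exact hb
  · exact hb.symm
  · exact absurd rfl hxy

lemma rot_mem_unitaryGroup (θ : ℝ) : Rot θ ∈ unitaryGroup (Fin 2) ℂ := by
  have h : (Real.cos θ : ℂ) ^ 2 + (Real.sin θ : ℂ) ^ 2 = 1 := by
    exact_mod_cast Real.cos_sq_add_sin_sq θ
  rw [mem_unitaryGroup_iff]
  ext i j
  fin_cases i <;> fin_cases j <;>
    simp [Rot, mul_apply, -Complex.ofReal_cos, -Complex.ofReal_sin]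
  · linear_combination h
  · ring
  · ring
  · linear_combination h

lemma exists_int_eq_mul_pi_div_two_of_rot_apply_eq_zero {θ : ℝ}
    (h : Rot θ 0 0 = 0 ∨ Rot θ 0 1 = 0) : ∃ k : ℤ, θ = k * (Real.pi / 2) := by
  have hcs : Real.cos θ = 0 ∨ Real.sin θ = 0 := by
    simpa [Rot, ← Complex.ofReal_cos, ← Complex.ofReal_sin] using h
  have hsin : Real.sin (2 * θ) = 0 := by
    rw [Real.sin_two_mul]
    rcases hcs with h | h <;> simp [h]
  obtain ⟨k, hk⟩ := Real.sin_eq_zero_iff.mp hsin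
  exact ⟨k, by linear_combination -hk / 2⟩

/-- For `d = 3`, if an attack strategy `(U, V)` (with `U`, `V` unitary) satisfies the
DDC, then `θ` is an integer multiple of `π/2`: only classical protocols can be broken
exactly with a maximally entangled qutrit. -/
theorem stmt_1 (θ : ℝ) (U : Matrix (Fin 3) (Fin 3) ℂ)
    (V : Matrix (Fin 2 × Fin 3) (Fin 2 × Fin 3) ℂ)
    (hU : U ∈ Matrix.unitaryGroup (Fin 3) ℂ)
    (hV : V ∈ Matrix.unitaryGroup (Fin 2 × Fin 3) ℂ)
    (hDDC : DDC 3 θ U V) :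
    ∃ k : ℤ, θ = k * (Real.pi / 2) := by
  exact exists_int_eq_mul_pi_div_two_of_rot_apply_eq_zero <|
    stmt_1_general (Fintype.card_fin 3) (rot_mem_unitaryGroup θ) hU hV
      (by simpa using hDDC.hasDisjointRows 0) (by simpa using hDDC.hasDisjointRows 1)
end

section
/- For every integer n ≥ 1, the minimum over θ̃ ∈ ℝ of the average squared overlap (1/n) ∑_{b=0}^{n−1} sin²(θ̃ + bπ/(2n)) is attained and equals (1/2) · (1 − (1/n) · csc(π/(2n))), where csc(x) = 1/sin(x). -/
open Real

/-!
The half-angle formula turns the sum of squares into a sum of cosines of angles in arithmetic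
progression, which has a closed form. As a function of `θ`, the sum is therefore a constant minus
a single cosine wave, and its minimum is the constant minus the amplitude. For the step `π / (2n)`
the amplitude is `1 / (2 sin (π / (2n)))`, because the `n` steps add up to `π / 2`.
-/

lemma sum_range_sin_add_mul_sq {h : ℝ} (hh : sin h ≠ 0) (θ : ℝ) (n : ℕ) :
    ∑ b ∈ Finset.range n, sin (θ + b * h) ^ 2 =
      n / 2 - sin (n * h) / (2 * sin h) * cos (2 * θ + (n - 1) * h) := by
  have sum_cos_double : ∑ b ∈ Finset.range n, cos (2 * (θ + b * h)) =
      sin (n * h) * cos (2 * θ + (n - 1) * h) / sin h := by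
    have double_angle (b : ℕ) : 2 * (θ + b * h) = 2 * h * b + 2 * θ := by ring
    simp only [double_angle]
    rw [eq_div_iff hh, mul_comm]
    convert sin_mul_sum_cos n (2 * h) (2 * θ) using 2 <;> ring_nf
  simp only [sin_sq_eq_half_sub, Finset.sum_sub_distrib, ← Finset.sum_div, sum_cos_double,
    Finset.sum_const, Finset.card_range, nsmul_eq_mul]
  ring

lemma isLeast_range_sub_mul_cos {k : ℝ} (hk : k ≠ 0) (c r φ : ℝ) :
    IsLeast (Set.range fun θ : ℝ ↦ c - r * cos (k * θ + φ)) (c - |r|) := by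
  constructor
  · have phase_eq (x : ℝ) : k * ((x - φ) / k) + φ = x := by
      rw [mul_div_cancel₀ _ hk, sub_add_cancel]
    rcases abs_cases r with ⟨abs_r, -⟩ | ⟨abs_r, -⟩
    · exact ⟨(0 - φ) / k, by simp only [phase_eq, cos_zero, mul_one, abs_r]⟩
    · exact ⟨(π - φ) / k, by simp only [phase_eq, cos_pi, mul_neg, mul_one, abs_r]⟩
  · rintro _ ⟨θ, rfl⟩
    have wave_le_amplitude : r * cos (k * θ + φ) ≤ |r| := calc
      r * cos (k * θ + φ) ≤ |r| * |cos (k * θ + φ)| := (le_abs_self _).trans_eq (abs_mul _ _)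
      _ ≤ |r| := mul_le_of_le_one_right (abs_nonneg r) (abs_cos_le_one _)
    exact sub_le_sub_left wave_le_amplitude c

lemma isLeast_range_sum_sin_add_mul_sq {h : ℝ} (hh : sin h ≠ 0) (n : ℕ) :
    IsLeast (Set.range fun θ : ℝ ↦ ∑ b ∈ Finset.range n, sin (θ + b * h) ^ 2)
      (n / 2 - |sin (n * h) / (2 * sin h)|) := by
  simpa only [sum_range_sin_add_mul_sq hh] using isLeast_range_sub_mul_cos two_ne_zero _ _ _

/-- For every integer `n ≥ 1`, the minimum over `θ̃ ∈ ℝ` of the average squared overlap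
`(1/n) ∑_{b=0}^{n−1} sin²(θ̃ + bπ/(2n))` is attained and equals
`(1/2)(1 − (1/n) csc(π/(2n)))`, where `csc x = 1 / sin x`. -/
theorem stmt_7 (n : ℕ) (hn : 1 ≤ n) :
    IsLeast
      (Set.range fun θ : ℝ =>
        (1 / (n : ℝ)) * ∑ b ∈ Finset.range n, Real.sin (θ + (b : ℝ) * Real.pi / (2 * n)) ^ 2)
      ((1 / 2) * (1 - (1 / (n : ℝ)) * (1 / Real.sin (Real.pi / (2 * n))))) := by
  have one_le : (1 : ℝ) ≤ n := Nat.one_le_cast.2 hn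
  have sin_step_pos : 0 < sin (π / (2 * n)) :=
    sin_pos_of_pos_of_lt_pi (by positivity) (div_lt_self pi_pos (by linarith))
  have total_angle : n * (π / (2 * n)) = π / 2 := by field_simp
  have min_sum := isLeast_range_sum_sin_add_mul_sq sin_step_pos.ne' n
  rw [total_angle, sin_pi_div_two, abs_of_pos (by positivity)] at min_sum
  have min_average :=
    (monotone_mul_left_of_nonneg (show 0 ≤ 1 / (n : ℝ) by positivity)).map_isLeast min_sum
  rw [← Set.range_comp] at min_average
  have min_value_eq : 1 / 2 * (1 - 1 / (n : ℝ) * (1 / sin (π / (2 * n)))) =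
      1 / n * (n / 2 - 1 / (2 * sin (π / (2 * n)))) := by field_simp
  rw [min_value_eq]
  simpa only [Function.comp_def, mul_div_assoc] using min_average
end

section
/- Let θ ∈ ℝ with θ not an integer multiple of π/2, let d ≥ 1, and let (U,V) be an attack strategy whose output states satisfy the deterministic distinguishability condition (DDC). Then for every b, x ∈ {0,1} and s ∈ {0,…,d−1}, the support supp(ψ_b(x,s)) = {u ∈ {0,…,2d−1} : ⟨u|ψ_b(x,s)⟩ ≠ 0} satisfies 2 ≤ |supp(ψ_b(x,s))| ≤ 2d − 2. -/
open Matrix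
open scoped Kronecker Classical

/-! Suppose `Vᴴ V = 1` and `V φ` is supported on a single index `u`. Then `φ = Vᴴ V φ` is
proportional to the complex conjugate of row `u` of `V`.

* If `φ = |x⟩ ⊗ |s⟩`, then row `u` of `V` is supported at `(x, s)`, so row `u` of `V (R ⊗ U)` is
  proportional to the tensor product of row `x` of `R` and row `s` of `U`.
* If `φ = (R ⊗ U)(|x⟩ ⊗ |s⟩)`, then row `u` of `V` is proportional to the conjugate of the tensor
  product of column `x` of `R` and column `s` of `U`.

Since `R = R_θ` has no zero entry and `U` has no zero row or column, either row is nonzero at both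
`(0, t)` and `(1, t)` for some `t`, against the DDC for the other value of `b`. The upper bound
follows because the states with inputs `0` and `1` have disjoint supports, each of size at least
`2`. -/

theorem exists_eq_single_of_card_support_lt_two {m α : Type*} [Fintype m] [DecidableEq m]
    [Nonempty m] [Zero α] [DecidableEq α] {v : m → α}
    (hv : (Finset.univ.filter fun u => v u ≠ 0).card < 2) :
    ∃ u c, v = Pi.single u c := by
  obtain ⟨u, hu⟩ := Finset.card_le_one_iff_subset_singleton.1 (Nat.le_of_lt_succ hv)
  refine ⟨u, v u, funext fun w => ?_⟩
  obtain rfl | hwu := eq_or_ne w u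
  · rw [Pi.single_eq_same]
  · rw [Pi.single_eq_of_ne hwu]
    by_contra hw
    exact hwu (Finset.mem_singleton.1 (hu (by simpa using hw)))

theorem card_le_card_univ_sub_of_disjoint {m : Type*} [Fintype m]
    {s t : Finset m} (h : Disjoint s t) : s.card ≤ Fintype.card m - t.card :=
  (Finset.card_le_card (Finset.subset_compl_iff_disjoint_right.2 h)).trans_eq (Finset.card_compl t)

section Isometry

variable {m k ι κ n l α : Type*} [Fintype m] [Fintype k] [DecidableEq k]
  [Fintype ι] [DecidableEq ι] [Fintype n] [DecidableEq n] [Semiring α] [StarRing α]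
  [DecidableEq α]

theorem exists_row_of_card_support_mulVec_lt_two {V : Matrix m k α} (hV : Vᴴ * V = 1)
    {φ : k → α} (hφ : φ ≠ 0)
    (hcard : (Finset.univ.filter fun u => (V *ᵥ φ) u ≠ 0).card < 2) :
    ∃ u c, ∀ j, φ j = star (V u j) * c := by
  have hφV : Vᴴ *ᵥ (V *ᵥ φ) = φ := by rw [mulVec_mulVec, hV, one_mulVec]
  have hm : Nonempty m := by
    by_contra hm
    rw [not_nonempty_iff] at hm
    exact hφ (by rw [← hφV, Subsingleton.elim (V *ᵥ φ) 0, mulVec_zero])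
  obtain ⟨u, c, huc⟩ := exists_eq_single_of_card_support_lt_two hcard
  refine ⟨u, c, fun j => ?_⟩
  rw [huc, mulVec_single] at hφV
  exact (congrFun hφV j).symm

variable [NoZeroDivisors α] {V : Matrix m (ι × n) α}

theorem two_le_card_support_col (hV : Vᴴ * V = 1) {R : Matrix ι κ α} {U : Matrix n l α}
    {x : ι} {s : n} {y y' : κ} {t : l} (hy : R x y ≠ 0) (hy' : R x y' ≠ 0) (ht : U s t ≠ 0)
    (hdist : ∀ u, (V * (R ⊗ₖ U)) u (y, t) = 0 ∨ (V * (R ⊗ₖ U)) u (y', t) = 0) :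
    2 ≤ (Finset.univ.filter fun u => V.col (x, s) u ≠ 0).card := by
  by_contra! hcard
  have : Nontrivial α := ⟨_, _, hy⟩
  rw [← mulVec_single_one] at hcard
  obtain ⟨u, c, huc⟩ := exists_row_of_card_support_mulVec_lt_two hV
    (Pi.single_ne_zero_iff.2 one_ne_zero) hcard
  have hxs : star (V u (x, s)) * c = 1 := by rw [← huc, Pi.single_eq_same]
  have hc : c ≠ 0 := right_ne_zero_of_mul_eq_one hxs
  have hV_xs : V u (x, s) ≠ 0 := star_ne_zero.1 (left_ne_zero_of_mul_eq_one hxs)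
  have hV_ne : ∀ j, j ≠ (x, s) → V u j = 0 := fun j hj => by
    have hj0 := huc j
    rw [Pi.single_eq_of_ne hj, zero_eq_mul] at hj0
    exact star_eq_zero.1 (hj0.resolve_right hc)
  have hrow : ∀ z, (V * (R ⊗ₖ U)) u (z, t) = V u (x, s) * (R x z * U s t) := fun z => by
    rw [mul_apply, Finset.sum_eq_single (x, s) (fun j _ hj => by rw [hV_ne j hj, zero_mul])
      (fun h => absurd (Finset.mem_univ _) h), kronecker_apply]
  have hrow_ne : ∀ {z}, R x z ≠ 0 → (V * (R ⊗ₖ U)) u (z, t) ≠ 0 := fun hz => by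
    rw [hrow]
    exact mul_ne_zero hV_xs (mul_ne_zero hz ht)
  exact (hdist u).elim (hrow_ne hy) (hrow_ne hy')

theorem two_le_card_support_mul_kronecker_col (hV : Vᴴ * V = 1) {R : Matrix ι κ α}
    {U : Matrix n l α} {x : κ} {s : l} {y y' : ι} {t : n} (hy : R y x ≠ 0) (hy' : R y' x ≠ 0)
    (ht : U t s ≠ 0) (hdist : ∀ u, V u (y, t) = 0 ∨ V u (y', t) = 0) :
    2 ≤ (Finset.univ.filter fun u => (V * (R ⊗ₖ U)).col (x, s) u ≠ 0).card := by
  by_contra! hcard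
  have hφ_ne : ∀ {z}, R z x ≠ 0 → (R ⊗ₖ U).col (x, s) (z, t) ≠ 0 := fun hz => mul_ne_zero hz ht
  obtain ⟨u, c, huc⟩ := exists_row_of_card_support_mulVec_lt_two hV
    (fun h => hφ_ne hy (congrFun h (y, t))) hcard
  have hV_ne : ∀ {z}, R z x ≠ 0 → V u (z, t) ≠ 0 := fun hz => by
    have hφ := hφ_ne hz
    rw [huc] at hφ
    exact star_ne_zero.1 (left_ne_zero_of_mul hφ)
  exact (hdist u).elim (hV_ne hy) (hV_ne hy')

end Isometry

theorem linearIndependent_row_of_mem_unitaryGroup {n K : Type*} [Fintype n] [DecidableEq n]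
    [Field K] [StarRing K] {U : Matrix n n K} (hU : U ∈ Matrix.unitaryGroup n K) :
    LinearIndependent K U.row :=
  linearIndependent_rows_iff_isUnit.2 (Unitary.toUnits ⟨U, hU⟩).isUnit

theorem linearIndependent_col_of_mem_unitaryGroup {n K : Type*} [Fintype n] [DecidableEq n]
    [Field K] [StarRing K] {U : Matrix n n K} (hU : U ∈ Matrix.unitaryGroup n K) :
    LinearIndependent K U.col :=
  linearIndependent_cols_iff_isUnit.2 (Unitary.toUnits ⟨U, hU⟩).isUnit

theorem Rot_apply_ne_zero {θ : ℝ} (hθ : ¬ ∃ k : ℤ, θ = k * (Real.pi / 2)) (i j : Fin 2) :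
    Rot θ i j ≠ 0 := by
  have hsin_two_mul : Real.sin (2 * θ) ≠ 0 := fun h => by
    obtain ⟨k, hk⟩ := Real.sin_eq_zero_iff.1 h
    exact hθ ⟨k, by linarith⟩
  rw [Real.sin_two_mul] at hsin_two_mul
  have hcos : (Real.cos θ : ℂ) ≠ 0 := Complex.ofReal_ne_zero.2 (right_ne_zero_of_mul hsin_two_mul)
  have hsin : (Real.sin θ : ℂ) ≠ 0 :=
    Complex.ofReal_ne_zero.2 (right_ne_zero_of_mul (left_ne_zero_of_mul hsin_two_mul))
  fin_cases i <;> fin_cases j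
  exacts [hcos, neg_ne_zero.2 hsin, hsin, hcos]

section OutputStates

variable {d : ℕ} {θ : ℝ} {U : Matrix (Fin d) (Fin d) ℂ}
  {V : Matrix (Fin 2 × Fin d) (Fin 2 × Fin d) ℂ}

theorem psi_zero (x : Fin 2) (s : Fin d) : psi d θ U V 0 x s = V.col (x, s) := by
  rw [psi, Fin.val_zero, pow_zero, mul_one, mulVec_single_one]

theorem psi_one (x : Fin 2) (s : Fin d) :
    psi d θ U V 1 x s = (V * (Rot θ ⊗ₖ U)).col (x, s) := by
  rw [psi, Fin.val_one, pow_one, mulVec_single_one]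

theorem DDC.disjoint_support (h : DDC d θ U V) (b : Fin 2) {x y : Fin 2} (hxy : x ≠ y)
    (s : Fin d) :
    Disjoint (Finset.univ.filter fun u => psi d θ U V b x s u ≠ 0)
      (Finset.univ.filter fun u => psi d θ U V b y s u ≠ 0) := by
  refine Finset.disjoint_filter.2 fun u _ hx hy => ?_
  have hu := h u s b
  fin_cases x <;> fin_cases y <;> simp_all

theorem DDC.two_le_card_support (hDDC : DDC d θ U V)
    (hθ : ¬ ∃ k : ℤ, θ = k * (Real.pi / 2)) (hrow : ∀ s, U.row s ≠ 0) (hcol : ∀ s, U.col s ≠ 0)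
    (hV : V ∈ Matrix.unitaryGroup (Fin 2 × Fin d) ℂ) (b x : Fin 2) (s : Fin d) :
    2 ≤ (Finset.univ.filter fun u => psi d θ U V b x s u ≠ 0).card := by
  have hR := Rot_apply_ne_zero hθ
  have hV_isometry : Vᴴ * V = 1 := Matrix.mem_unitaryGroup_iff'.1 hV
  match b with
  | 0 =>
    obtain ⟨t, ht⟩ := Function.ne_iff.1 (hrow s)
    rw [psi_zero]
    refine two_le_card_support_col (U := U) hV_isometry (hR x 0) (hR x 1) ht fun u => ?_
    simpa only [psi_one, col_apply] using hDDC u t 1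
  | 1 =>
    obtain ⟨t, ht⟩ := Function.ne_iff.1 (hcol s)
    rw [psi_one]
    refine two_le_card_support_mul_kronecker_col (U := U) hV_isometry (hR 0 x) (hR 1 x) ht
      fun u => ?_
    simpa only [psi_zero, col_apply] using hDDC u t 0

end OutputStates

theorem stmt_18_general (θ : ℝ) (hθ : ¬ ∃ k : ℤ, θ = k * (Real.pi / 2))
    (d : ℕ) (U : Matrix (Fin d) (Fin d) ℂ) (V : Matrix (Fin 2 × Fin d) (Fin 2 × Fin d) ℂ)
    (hrow : ∀ s, U.row s ≠ 0) (hcol : ∀ s, U.col s ≠ 0)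
    (hV : V ∈ Matrix.unitaryGroup (Fin 2 × Fin d) ℂ) (hDDC : DDC d θ U V) (b x : Fin 2)
    (s : Fin d) :
    2 ≤ (Finset.univ.filter fun u : Fin 2 × Fin d => psi d θ U V b x s u ≠ 0).card ∧
    (Finset.univ.filter fun u : Fin 2 × Fin d => psi d θ U V b x s u ≠ 0).card ≤ 2 * d - 2 := by
  have hlower := hDDC.two_le_card_support hθ hrow hcol hV b
  refine ⟨hlower x s, ?_⟩
  obtain ⟨y, hxy⟩ := exists_ne x
  calc (Finset.univ.filter fun u => psi d θ U V b x s u ≠ 0).card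
      ≤ Fintype.card (Fin 2 × Fin d) - (Finset.univ.filter fun u => psi d θ U V b y s u ≠ 0).card :=
        card_le_card_univ_sub_of_disjoint (hDDC.disjoint_support b hxy.symm s)
    _ ≤ Fintype.card (Fin 2 × Fin d) - 2 := Nat.sub_le_sub_left (hlower y s) _
    _ = 2 * d - 2 := by rw [Fintype.card_prod, Fintype.card_fin, Fintype.card_fin]

/-- If `θ` is not an integer multiple of `π/2` and the attack strategy `(U, V)`
satisfies the DDC, then every output state `ψ_b(x,s)` has support of size at least `2`
and at most `2d − 2`. -/
theorem stmt_18 (θ : ℝ) (hθ : ¬ ∃ k : ℤ, θ = k * (Real.pi / 2))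
    (d : ℕ) (hd : 1 ≤ d) (U : Matrix (Fin d) (Fin d) ℂ)
    (V : Matrix (Fin 2 × Fin d) (Fin 2 × Fin d) ℂ)
    (hU : U ∈ Matrix.unitaryGroup (Fin d) ℂ)
    (hV : V ∈ Matrix.unitaryGroup (Fin 2 × Fin d) ℂ)
    (hDDC : DDC d θ U V) :
    ∀ (b x : Fin 2) (s : Fin d),
      2 ≤ (Finset.univ.filter fun u : Fin 2 × Fin d => psi d θ U V b x s u ≠ 0).card ∧
      (Finset.univ.filter fun u : Fin 2 × Fin d => psi d θ U V b x s u ≠ 0).card ≤ 2 * d - 2 := by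
  exact stmt_18_general θ hθ d U V (linearIndependent_row_of_mem_unitaryGroup hU).ne_zero
    (linearIndependent_col_of_mem_unitaryGroup hU).ne_zero hV hDDC
end
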